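/- arXiv:math/0403250 — 3 statements merged into one kernel-verified Lean document; each statement's English description precedes it below -/
import Mathlib

section
/- Assume N ≥ 2. All elements of Γ_N of the form s_{ij}·γ_i·γ_j^{-1} (i ≠ j, γ ∈ Γ) are conjugate to one another in Γ_N. Moreover, for γ, γ' ∈ Γ∖{1} and indices i, j, the elements γ_i and γ'_j are conjugate in Γ_N if and only if γ and γ' are conjugate in Γ. -/
noncomputable section

/-- `SL(2,ℂ)`. -/
abbrev SL2 : Type := Matrix.SpecialLinearGroup (Fin 2) ℂ

/-- The permutation action of `S_N` on `Γ^N`, `(σ • f) i = f (σ⁻¹ i)`. -/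
def wphi (Γ : Type) [Group Γ] (N : ℕ) : Equiv.Perm (Fin N) →* MulAut (Fin N → Γ) where
  toFun σ := MulEquiv.arrowCongr σ (MulEquiv.refl Γ)
  map_one' := rfl
  map_mul' _ _ := rfl

/-- The wreath product `Γ_N = S_N ⋉ Γ^N`. -/
abbrev WP (Γ : Type) [Group Γ] (N : ℕ) : Type :=
  (Fin N → Γ) ⋊[wphi Γ N] Equiv.Perm (Fin N)

/-- `γ_i`: the element `γ ∈ Γ` placed in the `i`-th factor of `Γ^N ⊂ Γ_N`. -/
def tG {Γ : Type} [Group Γ] {N : ℕ} (i : Fin N) (γ : Γ) : WP Γ N :=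
  SemidirectProduct.inl (Pi.mulSingle i γ)

/-- The symplectic reflection `s_{ij} γ_i γ_j⁻¹` of type (S). -/
def tS {Γ : Type} [Group Γ] {N : ℕ} (i j : Fin N) (γ : Γ) : WP Γ N :=
  SemidirectProduct.inr (Equiv.swap i j) * tG i γ * (tG j γ)⁻¹

/-- The linear action of the wreath product `Γ_N` (for `Γ ⊂ SL(2,ℂ)`) on `V = L^{⊕N}`,
`(g · v) i = g.left i • v (g.right⁻¹ i)`. -/
def actL (Γ : Subgroup SL2) (N : ℕ) (g : WP Γ N) :
    (Fin N → Fin 2 → ℂ) →ₗ[ℂ] Fin N → Fin 2 → ℂ :=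
  LinearMap.pi fun i =>
    (Matrix.mulVecLin ((g.left i : SL2) : Matrix (Fin 2) (Fin 2) ℂ)).comp
      (LinearMap.proj (g.right⁻¹ i))

end

/-!
Conjugating `s_{ij}` by `γ_j` gives `γ_j s_{ij} γ_j⁻¹ = s_{ij} γ_i γ_j⁻¹`, so the first claim
reduces to the conjugacy of transpositions in `S_N`. For the second, conjugation by `(f, σ) ∈ Γ_N`
sends `γ_i` to `(f_{σ i} γ f_{σ i}⁻¹)_{σ i}`.
-/

theorem isConj_inl_iff {H G : Type*} [Group H] [Group G] {φ : G →* MulAut H} {x y : H} :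
    IsConj (SemidirectProduct.inl x : H ⋊[φ] G) (SemidirectProduct.inl y) ↔
      ∃ g, IsConj (φ g x) y := by
  have conj_inl (c : H ⋊[φ] G) : c * SemidirectProduct.inl x * c⁻¹ =
      SemidirectProduct.inl (c.left * φ c.right x * c.left⁻¹) := by
    ext <;> simp
  simp only [isConj_iff, conj_inl, SemidirectProduct.inl_inj]
  exact ⟨fun ⟨c, hc⟩ ↦ ⟨c.right, c.left, hc⟩, fun ⟨g, h, hgh⟩ ↦ ⟨⟨h, g⟩, hgh⟩⟩

theorem isConj_pi_iff {ι : Type*} {G : ι → Type*} [∀ i, Group (G i)] {f g : ∀ i, G i} :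
    IsConj f g ↔ ∀ i, IsConj (f i) (g i) := by
  simp only [isConj_iff, funext_iff, Pi.mul_apply, Pi.inv_apply]
  exact (Classical.skolem (p := fun i c ↦ c * f i * c⁻¹ = g i)).symm

theorem isConj_mulSingle_iff {ι G : Type*} [DecidableEq ι] [Group G] {i j : ι} {x y : G} :
    IsConj (Pi.mulSingle i x : ι → G) (Pi.mulSingle j y) ↔
      IsConj x y ∧ (i = j ∨ x = 1) := by
  rw [isConj_pi_iff]
  constructor
  · intro h
    have at_i := h i
    have at_j := h j
    rcases eq_or_ne i j with rfl | hij
    · simpa only [Pi.mulSingle_eq_same, true_or, and_true] using at_i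
    · rw [Pi.mulSingle_eq_same, Pi.mulSingle_eq_of_ne hij, isConj_one_left] at at_i
      rw [Pi.mulSingle_eq_same, Pi.mulSingle_eq_of_ne hij.symm, isConj_one_right] at at_j
      subst x y
      exact ⟨IsConj.refl 1, .inr rfl⟩
  · rintro ⟨hxy, rfl | rfl⟩ k
    · rcases eq_or_ne k i with rfl | hk
      · simpa only [Pi.mulSingle_eq_same] using hxy
      · simp only [Pi.mulSingle_eq_of_ne hk, IsConj.refl]
    · rw [isConj_one_right.1 hxy, Pi.mulSingle_one, Pi.mulSingle_one]

section WreathProduct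

variable {Γ : Type} [Group Γ] {N : ℕ}

theorem wphi_mulSingle (σ : Equiv.Perm (Fin N)) (i : Fin N) (γ : Γ) :
    wphi Γ N σ (Pi.mulSingle i γ) = Pi.mulSingle (σ i) γ :=
  Pi.mulSingle_comp_equiv σ.symm i γ

theorem inr_mul_tG (σ : Equiv.Perm (Fin N)) (i : Fin N) (γ : Γ) :
    (SemidirectProduct.inr σ : WP Γ N) * tG i γ = tG (σ i) γ * SemidirectProduct.inr σ := by
  rw [tG, tG, ← wphi_mulSingle, SemidirectProduct.inl_aut, map_inv, inv_mul_cancel_right]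

theorem tS_eq_conj (i j : Fin N) (γ : Γ) :
    tS i j γ = tG j γ * SemidirectProduct.inr (Equiv.swap i j) * (tG j γ)⁻¹ := by
  rw [tS, inr_mul_tG, Equiv.swap_apply_left]

theorem isConj_inr_swap_tS (i j : Fin N) (γ : Γ) :
    IsConj (SemidirectProduct.inr (Equiv.swap i j)) (tS i j γ) :=
  isConj_iff.2 ⟨tG j γ, (tS_eq_conj i j γ).symm⟩

theorem isConj_tS {i j i' j' : Fin N} (hij : i ≠ j) (hij' : i' ≠ j') (γ γ' : Γ) :
    IsConj (tS i j γ) (tS i' j' γ') :=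
  have swap_conj : IsConj (SemidirectProduct.inr (Equiv.swap i j) : WP Γ N)
      (SemidirectProduct.inr (Equiv.swap i' j')) :=
    MonoidHom.map_isConj _ (Equiv.Perm.isConj_swap hij hij')
  (isConj_inr_swap_tS i j γ).symm.trans (swap_conj.trans (isConj_inr_swap_tS i' j' γ'))

theorem isConj_tG_iff {i j : Fin N} {γ γ' : Γ} : IsConj (tG i γ) (tG j γ') ↔ IsConj γ γ' := by
  simp only [tG, isConj_inl_iff, wphi_mulSingle, isConj_mulSingle_iff]
  exact ⟨fun ⟨_, h, _⟩ ↦ h, fun h ↦ ⟨Equiv.swap i j, h, .inl (Equiv.swap_apply_left i j)⟩⟩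

end WreathProduct

theorem stmt_1_general (Γ : Type) [Group Γ] (N : ℕ) :
    (∀ (i j i' j' : Fin N) (γ γ' : Γ), i ≠ j → i' ≠ j' →
      IsConj (tS i j γ) (tS i' j' γ')) ∧
    (∀ (i j : Fin N) (γ γ' : Γ), IsConj (tG i γ) (tG j γ') ↔ IsConj γ γ') :=
  ⟨fun _ _ _ _ γ γ' hij hij' ↦ isConj_tS hij hij' γ γ', fun _ _ _ _ ↦ isConj_tG_iff⟩

/-- for `N ≥ 2`, all elements `s_{ij} γ_i γ_j⁻¹` (`i ≠ j`, `γ ∈ Γ`) are conjugate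
to one another in `Γ_N`; and for `γ, γ' ∈ Γ \ {1}`, the elements `γ_i` and `γ'_j` are
conjugate in `Γ_N` iff `γ` and `γ'` are conjugate in `Γ`. -/
theorem stmt_1 (Γ : Type) [Group Γ] [Finite Γ] (N : ℕ) (hN : 2 ≤ N) :
    (∀ (i j i' j' : Fin N) (γ γ' : Γ), i ≠ j → i' ≠ j' →
      IsConj (tS i j γ) (tS i' j' γ')) ∧
    (∀ (i j : Fin N) (γ γ' : Γ), γ ≠ 1 → γ' ≠ 1 →
      (IsConj (tG (Γ := Γ) i γ) (tG j γ') ↔ IsConj γ γ')) :=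
  ⟨(stmt_1_general Γ N).1, fun i j γ γ' _ _ ↦ (stmt_1_general Γ N).2 i j γ γ'⟩
end

section
/- In the smash product Γ_N # TV (the ℂ-algebra generated by the group Γ_N and the vector space V with relations g·v·g^{-1} = g(v) for g ∈ Γ_N, v ∈ V, realizable as an explicit quotient of a free algebra), the two-sided ideal generated by the elements [u,v] − κ(u,v) for u, v ∈ V, where κ(u,v) = ω_V(u,v)·1 + Σ_{s ∈ 𝒮} f_s · ω_s(u,v) · s, coincides with the two-sided ideal generated by the relators of (R1): [x_i,y_i] − 1 − (k/2)Σ_{j≠i}Σ_{γ∈Γ} s_{ij}γ_iγ_j^{-1} − Σ_{γ∈Γ∖{1}} c_γ γ_i for all i, and (R2): [u_i,v_j] + (k/2)Σ_{γ∈Γ} ω_L(γu,v) s_{ij}γ_iγ_j^{-1} for all u, v ∈ L and i ≠ j. In particular the two presentations define the same algebra H_{1,k,c}(Γ_N). -/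
noncomputable section

noncomputable section

variable (Γ : Subgroup SL2) [Fintype Γ] [DecidableEq Γ] (N : ℕ)

/-- Generator `g ∈ Γ_N` in the free algebra on `Γ_N ⊕ {x_i, y_i}`. -/
def nG (g : WP Γ N) : FreeAlgebra ℂ (WP Γ N ⊕ Fin N × Fin 2) :=
  FreeAlgebra.ι ℂ (Sum.inl g)

/-- Generator `x_i` (for `p = 0`) resp. `y_i` (for `p = 1`) in the free algebra. -/
def nX (i : Fin N) (p : Fin 2) : FreeAlgebra ℂ (WP Γ N ⊕ Fin N × Fin 2) :=
  FreeAlgebra.ι ℂ (Sum.inr (i, p))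

/-- The general vector `v ∈ V = L^{⊕N}` inside the free algebra. -/
def nV (v : Fin N → Fin 2 → ℂ) : FreeAlgebra ℂ (WP Γ N ⊕ Fin N × Fin 2) :=
  ∑ i : Fin N, ∑ p : Fin 2, v i p • nX Γ N i p

/-- The standard symplectic form `ω_L` on `L = ℂ²`. -/
def omL (u v : Fin 2 → ℂ) : ℂ := u 0 * v 1 - u 1 * v 0

/-- The symplectic form `ω_V = ω_L^{⊕N}` on `V = L^{⊕N}`. -/
def omV (u v : Fin N → Fin 2 → ℂ) : ℂ := ∑ i : Fin N, omL (u i) (v i)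

/-- The relations of the smash product `Γ_N ♯ TV`: the group relations of `Γ_N` and the
relations `g v g⁻¹ = g(v)` for `v ∈ V`. -/
inductive SmashRel :
    FreeAlgebra ℂ (WP Γ N ⊕ Fin N × Fin 2) → FreeAlgebra ℂ (WP Γ N ⊕ Fin N × Fin 2) → Prop
  | grp_mul (g h : WP Γ N) : SmashRel (nG Γ N g * nG Γ N h) (nG Γ N (g * h))
  | grp_one : SmashRel (nG Γ N 1) 1
  | grp_conj (g : WP Γ N) (v : Fin N → Fin 2 → ℂ) :
      SmashRel (nG Γ N g * nV Γ N v * nG Γ N g⁻¹) (nV Γ N (actL Γ N g v))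

/-- The smash product `Γ_N ♯ TV`, realized as a quotient of the free algebra. -/
abbrev Smash : Type := RingQuot (SmashRel Γ N)

/-- The image of the group element `g` in the smash product. -/
def sG (g : WP Γ N) : Smash Γ N := RingQuot.mkAlgHom ℂ (SmashRel Γ N) (nG Γ N g)

/-- The image of the vector `v ∈ V` in the smash product. -/
def sV (v : Fin N → Fin 2 → ℂ) : Smash Γ N := RingQuot.mkAlgHom ℂ (SmashRel Γ N) (nV Γ N v)

/-- The image of `x_i, y_i` in the smash product. -/
def sX (i : Fin N) (p : Fin 2) : Smash Γ N := RingQuot.mkAlgHom ℂ (SmashRel Γ N) (nX Γ N i p)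

/-- The set `𝒮` of symplectic reflections of `Γ_N`. -/
def SRefl : Set (WP Γ N) :=
  {s | Module.finrank ℂ (LinearMap.range (LinearMap.id - actL Γ N s)) = 2}

/-- The projection of `V` onto `Im(Id - s)` along `Ker(Id - s)` (for `s` of finite
order), namely `Id` minus the averaging operator `(1/ord s) ∑_m s^m`. -/
def projS (s : WP Γ N) : (Fin N → Fin 2 → ℂ) →ₗ[ℂ] Fin N → Fin 2 → ℂ :=
  LinearMap.id - (orderOf s : ℂ)⁻¹ • ∑ p ∈ Finset.range (orderOf s), actL Γ N (s ^ p)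

/-- The form `ω_s`: the bilinear form on `V` which coincides with `ω_V` on
`Im(Id - s)` and has `Ker(Id - s)` as its radical. -/
def omS (s : WP Γ N) (u v : Fin N → Fin 2 → ℂ) : ℂ :=
  omV N (projS Γ N s u) (projS Γ N s v)

/-- The element `κ(u,v) = ω_V(u,v)·1 + ∑_{s ∈ 𝒮} f_s ω_s(u,v) s` of the smash product. -/
def kappa (f : WP Γ N → ℂ) (u v : Fin N → Fin 2 → ℂ) : Smash Γ N :=
  omV N u v • 1 + ∑ᶠ s ∈ SRefl Γ N, (f s * omS Γ N s u v) • sG Γ N s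

end

/-!
A nontrivial element of finite order in `SL(2,ℂ)` has no nonzero fixed vector, and comparing
`Im(Id - s)` with a copy of `L` inside it shows that the symplectic reflections of `Γ_N` are the
`γ_i` with `γ ≠ 1`, for which `ω_s(u, v) = ω_L(u_i, v_i)`, and the `s_{ij}γ_iγ_j⁻¹`, for which
`ω_s(u, v) = ½ ω_L(u_i - γ⁻¹u_j, v_i - γ⁻¹v_j)`. As `s_{ij}γ_iγ_j⁻¹ = s_{ji}(γ⁻¹)_j((γ⁻¹)_i)⁻¹`, the
four terms of the latter form can be distributed symmetrically over the ordered pairs `(i, j)` and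
`(j, i)`. This gives
`[u, v] - κ(u, v) = ∑_i (ω_L(u_i, v_i) R1_i + ∑_{j ≠ i} R2_{ij}(u_i, v_j))`,
which places the left-hand generators in the right-hand ideal; conversely `R1_i` and `R2_{ij}(a, b)`
are themselves of the form `[u, v] - κ(u, v)`, with `(u, v) = (x_i, y_i)` and `(u, v) = (a_i, b_j)`.
-/

section Permutations

lemma perm_eq_swap_of_forall_ne {α : Type*} [DecidableEq α] {σ : Equiv.Perm α} {i j : α}
    (hij : i ≠ j) (hi : σ i = j) (hfix : ∀ l, l ≠ i → l ≠ j → σ l = l) :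
    σ = Equiv.swap i j := by
  have hj : σ j = i := by
    by_contra hne
    have hjj : σ j ≠ j := fun h ↦ hij (σ.injective (hi.trans h.symm))
    exact hjj (σ.injective (hfix _ hne hjj))
  ext1 l
  rcases eq_or_ne l i with rfl | hli
  · rw [hi, Equiv.swap_apply_left]
  rcases eq_or_ne l j with rfl | hlj
  · rw [hj, Equiv.swap_apply_right]
  · rw [hfix l hli hlj, Equiv.swap_apply_of_ne_of_ne hli hlj]

lemma eq_and_eq_of_swap_eq_swap_of_lt {α : Type*} [LinearOrder α] {i j i' j' : α} (hij : i < j)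
    (hij' : i' < j') (h : Equiv.swap i j = Equiv.swap i' j') : i = i' ∧ j = j' := by
  have hi : Equiv.swap i' j' i = j := by rw [← h, Equiv.swap_apply_left]
  rw [Equiv.swap_apply_def] at hi
  split_ifs at hi with hii' hij''
  · exact ⟨hii', hi.symm⟩
  · exact absurd (hi ▸ hij' : j < j') (hij'' ▸ hij.not_gt)
  · exact absurd hi hij.ne

lemma sum_lt_add_swap_eq_sum_ne {ι G M : Type*} [Fintype ι] [LinearOrder ι] [Fintype G]
    [InvolutiveInv G] [AddCommMonoid M] (F : ι → ι → G → M) :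
    ∑ p : ι × ι × G with p.1 < p.2.1, (F p.1 p.2.1 p.2.2 + F p.2.1 p.1 p.2.2⁻¹) =
      ∑ i, ∑ j with j ≠ i, ∑ g, F i j g := by
  have hswap : ∑ p : ι × ι × G with p.1 < p.2.1, F p.2.1 p.1 p.2.2⁻¹ =
      ∑ p : ι × ι × G with p.2.1 < p.1, F p.1 p.2.1 p.2.2 :=
    Finset.sum_nbij' (fun p ↦ (p.2.1, p.1, p.2.2⁻¹)) (fun p ↦ (p.2.1, p.1, p.2.2⁻¹))
      (by simp) (by simp) (by simp) (by simp) (by simp)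
  rw [Finset.sum_add_distrib, hswap]
  simp only [Finset.sum_filter, Fintype.sum_prod_type, ← Finset.sum_add_distrib]
  refine Finset.sum_congr rfl fun i _ ↦ Finset.sum_congr rfl fun j _ ↦ ?_
  rcases lt_trichotomy i j with hlt | rfl | hgt
  · simp [hlt, hlt.not_gt, hlt.ne']
  · simp
  · simp [hgt, hgt.not_gt, hgt.ne]

end Permutations

section WreathProduct

variable {Γ : Type} [Group Γ] {N : ℕ}

lemma tG_left (i : Fin N) (γ : Γ) : (tG i γ : WP Γ N).left = Pi.mulSingle i γ := rfl

lemma tG_right (i : Fin N) (γ : Γ) : (tG i γ : WP Γ N).right = 1 := rfl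

lemma isOfFinOrder_tG {γ : Γ} (hγ : IsOfFinOrder γ) (i : Fin N) :
    IsOfFinOrder (tG i γ : WP Γ N) :=
  (SemidirectProduct.inl.comp (MonoidHom.mulSingle (fun _ ↦ Γ) i)).isOfFinOrder hγ

lemma tS_right (i j : Fin N) (γ : Γ) : (tS i j γ : WP Γ N).right = Equiv.swap i j := by
  simp [tS, tG]

lemma tS_left_apply (i j : Fin N) (γ : Γ) (l : Fin N) :
    (tS i j γ : WP Γ N).left l = (Pi.mulSingle i γ : Fin N → Γ) (Equiv.swap i j l) *
      ((Pi.mulSingle j γ : Fin N → Γ) (Equiv.swap i j l))⁻¹ := by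
  simp only [tS, tG, mul_assoc, ← map_inv, ← map_mul]
  rw [SemidirectProduct.mul_left, SemidirectProduct.left_inr, SemidirectProduct.left_inl, one_mul]
  rfl

lemma tS_left_apply_left {i j : Fin N} (hij : i ≠ j) (γ : Γ) :
    (tS i j γ : WP Γ N).left i = γ⁻¹ := by
  simp [tS_left_apply, hij.symm]

lemma tS_left_apply_right {i j : Fin N} (hij : i ≠ j) (γ : Γ) :
    (tS i j γ : WP Γ N).left j = γ := by
  simp [tS_left_apply, hij]

lemma tS_left_apply_of_ne {i j l : Fin N} (hli : l ≠ i) (hlj : l ≠ j) (γ : Γ) :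
    (tS i j γ : WP Γ N).left l = 1 := by
  simp [tS_left_apply, Equiv.swap_apply_of_ne_of_ne hli hlj, hli, hlj]

lemma eq_tS {s : WP Γ N} {i j : Fin N} (hij : i ≠ j) (hright : s.right = Equiv.swap i j)
    (hi : s.left i = (s.left j)⁻¹) (hl : ∀ l, l ≠ i → l ≠ j → s.left l = 1) :
    s = tS i j (s.left j) := by
  refine SemidirectProduct.ext (funext fun l ↦ ?_) (by rw [hright, tS_right])
  rcases eq_or_ne l i with rfl | hli
  · rw [tS_left_apply_left hij, hi]
  rcases eq_or_ne l j with rfl | hlj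
  · rw [tS_left_apply_right hij]
  · rw [hl l hli hlj, tS_left_apply_of_ne hli hlj]

lemma tS_swap {i j : Fin N} (hij : i ≠ j) (γ : Γ) : (tS j i γ⁻¹ : WP Γ N) = tS i j γ := by
  have h := eq_tS (s := (tS j i γ⁻¹ : WP Γ N)) hij (by rw [tS_right, Equiv.swap_comm])
    (by rw [tS_left_apply_left hij.symm, tS_left_apply_right hij.symm, inv_inv])
    fun l hli hlj ↦ tS_left_apply_of_ne hlj hli _
  rwa [tS_left_apply_left hij.symm, inv_inv] at h

lemma tS_mul_self {i j : Fin N} (hij : i ≠ j) (γ : Γ) : (tS i j γ : WP Γ N) * tS i j γ = 1 := by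
  refine SemidirectProduct.ext (funext fun l ↦ ?_) ?_
  · change (tS i j γ : WP Γ N).left l *
      (tS i j γ : WP Γ N).left ((tS i j γ : WP Γ N).right⁻¹ l) = 1
    rw [tS_right, Equiv.swap_inv]
    rcases eq_or_ne l i with rfl | hli
    · rw [Equiv.swap_apply_left, tS_left_apply_left hij, tS_left_apply_right hij, inv_mul_cancel]
    rcases eq_or_ne l j with rfl | hlj
    · rw [Equiv.swap_apply_right, tS_left_apply_left hij, tS_left_apply_right hij, mul_inv_cancel]
    · rw [Equiv.swap_apply_of_ne_of_ne hli hlj, tS_left_apply_of_ne hli hlj, one_mul]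
  · rw [SemidirectProduct.mul_right, tS_right, Equiv.swap_mul_self, SemidirectProduct.one_right]

lemma isOfFinOrder_tS {i j : Fin N} (hij : i ≠ j) (γ : Γ) : IsOfFinOrder (tS i j γ : WP Γ N) :=
  isOfFinOrder_iff_pow_eq_one.mpr ⟨2, two_pos, by rw [pow_two, tS_mul_self hij]⟩

lemma tG_ne_tS {i j : Fin N} (hij : i ≠ j) (l : Fin N) (γ δ : Γ) : tG l γ ≠ tS i j δ := by
  intro h
  have hright := congrArg SemidirectProduct.right h
  rw [tG_right, tS_right, eq_comm, Equiv.swap_eq_one_iff] at hright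
  exact hij hright

lemma tG_injOn : Set.InjOn (fun p : Fin N × Γ ↦ (tG p.1 p.2 : WP Γ N)) {p | p.2 ≠ 1} := by
  rintro ⟨i, γ⟩ (hγ : γ ≠ 1) ⟨j, δ⟩ - h
  have hleft : (Pi.mulSingle i γ : Fin N → Γ) = Pi.mulSingle j δ := congrArg (·.left) h
  have hi := congrFun hleft i
  rw [Pi.mulSingle_eq_same] at hi
  rcases eq_or_ne i j with rfl | hij
  · rw [Pi.mulSingle_eq_same] at hi
    rw [hi]
  · rw [Pi.mulSingle_eq_of_ne hij] at hi
    exact absurd hi hγ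

lemma tS_injOn : Set.InjOn (fun p : Fin N × Fin N × Γ ↦ (tS p.1 p.2.1 p.2.2 : WP Γ N))
    {p | p.1 < p.2.1} := by
  rintro ⟨i, j, γ⟩ (hij : i < j) ⟨i', j', δ⟩ (hij' : i' < j') h
  have hright : Equiv.swap i j = Equiv.swap i' j' := by
    simpa only [tS_right] using congrArg SemidirectProduct.right h
  obtain ⟨rfl, rfl⟩ := eq_and_eq_of_swap_eq_swap_of_lt hij hij' hright
  have hleft := congrArg (fun s : WP Γ N ↦ s.left j) h
  simp only [tS_left_apply_right hij.ne] at hleft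
  rw [hleft]

end WreathProduct

section TautologicalRepresentation

open Polynomial in
lemma eq_one_of_isNilpotent_sub_one_of_pow_eq_one {K V : Type*} [Field K] [AddCommGroup V]
    [Module K V] {T : Module.End K V} {n : ℕ} (hn : (n : K) ≠ 0) (hpow : T ^ n = 1)
    (hT : IsNilpotent (T - 1)) : T = 1 := by
  have hsemisimple : T.IsSemisimple :=
    Module.End.isSemisimple_of_squarefree_aeval_eq_zero
      (X_pow_sub_one_separable_iff.mpr hn).squarefree (by simp [hpow])
  have hsub : (T - 1).IsSemisimple := by
    simpa using Module.End.isSemisimple_sub_algebraMap_iff (μ := (1 : K)).mpr hsemisimple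
  exact sub_eq_zero.mp (Module.End.eq_zero_of_isNilpotent_isSemisimple hT hsub)

/-- The tautological representation of `Γ ⊂ SL(2,ℂ)` on `L = ℂ²`. -/
def tautRep (Γ : Subgroup SL2) : Representation ℂ Γ (Fin 2 → ℂ) where
  toFun γ := Matrix.mulVecLin ((γ : SL2) : Matrix (Fin 2) (Fin 2) ℂ)
  map_one' := Matrix.mulVecLin_one
  map_mul' _ _ := Matrix.mulVecLin_mul _ _

variable {Γ : Subgroup SL2}

lemma tautRep_injective : Function.Injective (tautRep Γ) := fun _ _ h ↦
  Subtype.ext (Subtype.ext (Matrix.toLin'.injective h))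

lemma omL_tautRep (γ : Γ) (u v : Fin 2 → ℂ) : omL (tautRep Γ γ u) (tautRep Γ γ v) = omL u v := by
  have hdet := Matrix.det_fin_two ((γ : SL2) : Matrix (Fin 2) (Fin 2) ℂ)
  rw [(γ : SL2).det_coe] at hdet
  simp only [omL, tautRep, MonoidHom.coe_mk, OneHom.coe_mk, Matrix.mulVecLin_apply, Matrix.mulVec,
    dotProduct, Fin.sum_univ_two]
  linear_combination -(u 0 * v 1 - u 1 * v 0) * hdet

lemma omL_tautRep_inv_right (γ : Γ) (u v : Fin 2 → ℂ) :
    omL u (tautRep Γ γ⁻¹ v) = omL (tautRep Γ γ u) v := by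
  rw [← omL_tautRep γ, Representation.self_inv_apply]

lemma omL_sub_left (u u' v : Fin 2 → ℂ) : omL (u - u') v = omL u v - omL u' v := by
  simp only [omL, Pi.sub_apply]; ring

lemma omL_sub_right (u v v' : Fin 2 → ℂ) : omL u (v - v') = omL u v - omL u v' := by
  simp only [omL, Pi.sub_apply]; ring

lemma omL_smul_smul (a b : ℂ) (u v : Fin 2 → ℂ) : omL (a • u) (b • v) = a * b * omL u v := by
  simp only [omL, Pi.smul_apply, smul_eq_mul]; ring

lemma omL_neg_neg (u v : Fin 2 → ℂ) : omL (-u) (-v) = omL u v := by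
  simp only [omL, Pi.neg_apply]; ring

@[simp]
lemma omL_zero_left (v : Fin 2 → ℂ) : omL 0 v = 0 := by simp [omL]

@[simp]
lemma omL_zero_right (u : Fin 2 → ℂ) : omL u 0 = 0 := by simp [omL]

lemma exists_eq_smul_of_omL_eq_zero {u v : Fin 2 → ℂ} (hu : u ≠ 0) (huv : omL u v = 0) :
    ∃ a : ℂ, v = a • u := by
  have hcross : u 0 * v 1 = u 1 * v 0 := sub_eq_zero.mp huv
  by_cases h0 : u 0 = 0
  · have h1 : u 1 ≠ 0 := fun h1 ↦ hu (funext (Fin.forall_fin_two.mpr ⟨h0, h1⟩))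
    refine ⟨v 1 / u 1, funext (Fin.forall_fin_two.mpr ⟨?_, ?_⟩)⟩ <;> simp_all
  · refine ⟨v 0 / u 0, funext (Fin.forall_fin_two.mpr ⟨?_, ?_⟩)⟩
    · simp [h0]
    · simp only [Pi.smul_apply, smul_eq_mul]
      field_simp
      linear_combination hcross

-- `γ` preserves `ω_L` and `v`, so `ω_L(v, γw - w) = 0`; hence `γ - 1` maps `L` into the line `ℂv`,
-- which it kills, and a unipotent element of finite order in characteristic zero is trivial.
lemma eq_zero_of_tautRep_apply_eq_self {γ : Γ} (hfin : IsOfFinOrder γ) (hγ : γ ≠ 1)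
    {v : Fin 2 → ℂ} (hv : tautRep Γ γ v = v) : v = 0 := by
  by_contra hv0
  have hnil : (tautRep Γ γ - 1) ^ 2 = 0 := by
    refine LinearMap.ext fun w ↦ ?_
    have hω : omL v (tautRep Γ γ w - w) = 0 := by
      rw [omL_sub_right, sub_eq_zero]
      nth_rw 1 [← hv]
      exact omL_tautRep γ v w
    obtain ⟨a, ha⟩ := exists_eq_smul_of_omL_eq_zero hv0 hω
    simp [pow_two, ha, hv]
  refine hγ (tautRep_injective ?_)
  rw [map_one]
  refine eq_one_of_isNilpotent_sub_one_of_pow_eq_one (n := orderOf γ) ?_ ?_ ⟨2, hnil⟩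
  · exact_mod_cast hfin.orderOf_pos.ne'
  · rw [← map_pow, pow_orderOf_eq_one, map_one]

lemma sub_tautRep_surjective {γ : Γ} (hfin : IsOfFinOrder γ) (hγ : γ ≠ 1) :
    Function.Surjective fun v ↦ v - tautRep Γ γ v := by
  have hinj : Function.Injective (1 - tautRep Γ γ : Module.End ℂ (Fin 2 → ℂ)) :=
    (injective_iff_map_eq_zero _).mpr fun v hv ↦
      eq_zero_of_tautRep_apply_eq_self hfin hγ (sub_eq_zero.mp hv).symm
  exact LinearMap.injective_iff_surjective.mp hinj

end TautologicalRepresentation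

section WreathRepresentation

/-- The action `actL` of the wreath product `Γ_N` on `V = L^{⊕N}`, bundled as a representation. -/
def wreathRep (Γ : Subgroup SL2) (N : ℕ) : Representation ℂ (WP Γ N) (Fin N → Fin 2 → ℂ) where
  toFun := actL Γ N
  map_one' := LinearMap.ext fun v ↦ funext fun i ↦ LinearMap.congr_fun (map_one (tautRep Γ)) (v i)
  map_mul' g h := LinearMap.ext fun _ ↦ funext fun i ↦
    LinearMap.congr_fun (map_mul (tautRep Γ) (g.left i) (h.left (g.right⁻¹ i))) _

variable {Γ : Subgroup SL2} {N : ℕ}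

lemma wreathRep_apply (g : WP Γ N) (v : Fin N → Fin 2 → ℂ) (i : Fin N) :
    wreathRep Γ N g v i = tautRep Γ (g.left i) (v (g.right⁻¹ i)) := rfl

lemma mem_SRefl_iff_finrank {s : WP Γ N} :
    s ∈ SRefl Γ N ↔ Module.finrank ℂ (1 - wreathRep Γ N s).range = 2 := Iff.rfl

lemma left_eq_one_and_right_apply_of_fixed {s : WP Γ N} {l : Fin N}
    (hs : ∀ v, wreathRep Γ N s v l = v l) : s.left l = 1 ∧ s.right l = l := by
  have hright : s.right⁻¹ l = l := by
    by_contra hne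
    have h := hs (Pi.single l 1)
    rw [wreathRep_apply, Pi.single_eq_of_ne hne, map_zero, Pi.single_eq_same] at h
    exact zero_ne_one h
  refine ⟨tautRep_injective (LinearMap.ext fun a ↦ ?_), (Equiv.Perm.inv_eq_iff_eq.mp hright).symm⟩
  have h := hs (Pi.single l a)
  rw [wreathRep_apply, hright, Pi.single_eq_same] at h
  rw [h, map_one, Module.End.one_apply]

lemma projS_add_of_mem_range_of_fixed {s : WP Γ N} (hfin : IsOfFinOrder s)
    {w z : Fin N → Fin 2 → ℂ} (hw : w ∈ (1 - wreathRep Γ N s).range)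
    (hz : wreathRep Γ N s z = z) : projS Γ N s (w + z) = w := by
  set T := wreathRep Γ N s
  have hproj : projS Γ N s = 1 - (orderOf s : ℂ)⁻¹ • ∑ p ∈ Finset.range (orderOf s), T ^ p := by
    simp only [T, ← map_pow]; rfl
  have hsum_w : (∑ p ∈ Finset.range (orderOf s), T ^ p) w = 0 := by
    obtain ⟨y, rfl⟩ := hw
    have hgeom := geom_sum_mul_neg T (orderOf s)
    rw [← map_pow, pow_orderOf_eq_one, map_one, sub_self] at hgeom
    exact LinearMap.congr_fun hgeom y
  have hsum_z : (∑ p ∈ Finset.range (orderOf s), T ^ p) z = (orderOf s : ℂ) • z := by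
    have hpow (p : ℕ) : (T ^ p) z = z := by
      rw [Module.End.pow_apply]
      exact Function.iterate_fixed hz p
    simp only [LinearMap.sum_apply, hpow, Finset.sum_const, Finset.card_range,
      Nat.cast_smul_eq_nsmul]
  have horder : (orderOf s : ℂ) ≠ 0 := by exact_mod_cast hfin.orderOf_pos.ne'
  rw [hproj, LinearMap.sub_apply, LinearMap.smul_apply,
    map_add (∑ p ∈ Finset.range (orderOf s), T ^ p), hsum_w, hsum_z, zero_add,
    inv_smul_smul₀ horder, Module.End.one_apply, add_sub_cancel_right]

end WreathRepresentation

section Reflections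

variable {Γ : Subgroup SL2} {N : ℕ}

/-- The embedding `a ↦ a_i - (γa)_j` of `L` into `V`, whose image is `Im(Id - s)` for the
reflection `s = s_{ij}γ_iγ_j⁻¹`. -/
def antidiagonal (i j : Fin N) (γ : Γ) : (Fin 2 → ℂ) →ₗ[ℂ] Fin N → Fin 2 → ℂ :=
  LinearMap.single ℂ (fun _ ↦ Fin 2 → ℂ) i -
    LinearMap.single ℂ (fun _ ↦ Fin 2 → ℂ) j ∘ₗ tautRep Γ γ

lemma antidiagonal_apply (i j : Fin N) (γ : Γ) (a : Fin 2 → ℂ) :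
    antidiagonal i j γ a = Pi.single i a - Pi.single j (tautRep Γ γ a) := rfl

lemma antidiagonal_injective {i j : Fin N} (hij : i ≠ j) (γ : Γ) :
    Function.Injective (antidiagonal i j γ) := fun a b hab ↦ by
  simpa [antidiagonal_apply, hij] using congrFun hab i

lemma apply_right_eq_of_mem_range_antidiagonal {i j : Fin N} (hij : i ≠ j) {γ : Γ}
    {w : Fin N → Fin 2 → ℂ} (hw : w ∈ (antidiagonal i j γ).range) :
    w j = -tautRep Γ γ (w i) := by
  obtain ⟨a, rfl⟩ := hw
  simp [antidiagonal_apply, hij, hij.symm]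

lemma apply_eq_zero_of_mem_range_antidiagonal {i j l : Fin N} (hli : l ≠ i) (hlj : l ≠ j) {γ : Γ}
    {w : Fin N → Fin 2 → ℂ} (hw : w ∈ (antidiagonal i j γ).range) : w l = 0 := by
  obtain ⟨a, rfl⟩ := hw
  simp [antidiagonal_apply, hli, hlj]

lemma sub_wreathRep_tG (i : Fin N) (γ : Γ) (v : Fin N → Fin 2 → ℂ) :
    v - wreathRep Γ N (tG i γ) v = Pi.single i (v i - tautRep Γ γ (v i)) := by
  ext1 l
  rcases eq_or_ne l i with rfl | hli
  · simp [wreathRep_apply, tG_left, tG_right]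
  · simp [wreathRep_apply, tG_left, tG_right, hli]

lemma sub_wreathRep_tS {i j : Fin N} (hij : i ≠ j) (γ : Γ) (v : Fin N → Fin 2 → ℂ) :
    v - wreathRep Γ N (tS i j γ) v = antidiagonal i j γ (v i - tautRep Γ γ⁻¹ (v j)) := by
  ext1 l
  rw [antidiagonal_apply, Pi.sub_apply, wreathRep_apply, tS_right, Equiv.swap_inv]
  rcases eq_or_ne l i with rfl | hli
  · simp [tS_left_apply_left hij, hij]
  rcases eq_or_ne l j with rfl | hlj
  · simp [tS_left_apply_right hij, hij.symm]
  · simp [tS_left_apply_of_ne hli hlj, Equiv.swap_apply_of_ne_of_ne hli hlj, hli, hlj]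

lemma range_single_le {s : WP Γ N} (hright : s.right = 1) {i : Fin N}
    (hfin : IsOfFinOrder (s.left i)) (hi : s.left i ≠ 1) :
    (LinearMap.single ℂ (fun _ ↦ Fin 2 → ℂ) i).range ≤ (1 - wreathRep Γ N s).range := by
  rintro _ ⟨a, rfl⟩
  obtain ⟨b, hb⟩ := sub_tautRep_surjective hfin hi a
  refine ⟨Pi.single i b, funext fun l ↦ ?_⟩
  rw [LinearMap.sub_apply, Module.End.one_apply, Pi.sub_apply, wreathRep_apply, hright, inv_one,
    Equiv.Perm.one_apply, LinearMap.single_apply]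
  rcases eq_or_ne l i with rfl | hli
  · simpa only [Pi.single_eq_same] using hb
  · simp only [Pi.single_eq_of_ne hli, map_zero, sub_zero]

lemma range_antidiagonal_le {s : WP Γ N} {i j : Fin N} (hij : s.right i = j) :
    (antidiagonal i j (s.left j)).range ≤ (1 - wreathRep Γ N s).range := by
  rintro _ ⟨a, rfl⟩
  refine ⟨Pi.single i a, funext fun l ↦ ?_⟩
  rw [LinearMap.sub_apply, Module.End.one_apply, Pi.sub_apply, wreathRep_apply, antidiagonal_apply,
    Pi.sub_apply]
  rcases eq_or_ne l j with rfl | hlj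
  · rw [← hij, Equiv.Perm.coe_inv, Equiv.symm_apply_apply, Pi.single_eq_same, Pi.single_eq_same]
  · have hne : s.right⁻¹ l ≠ i := fun h ↦ hlj (hij ▸ Equiv.Perm.inv_eq_iff_eq.mp h)
    rw [Pi.single_eq_of_ne hne, Pi.single_eq_of_ne hlj, map_zero]

lemma range_one_sub_wreathRep_tG {γ : Γ} (hfin : IsOfFinOrder γ) (hγ : γ ≠ 1) (i : Fin N) :
    (1 - wreathRep Γ N (tG i γ)).range = (LinearMap.single ℂ (fun _ ↦ Fin 2 → ℂ) i).range := by
  have hleft : (tG i γ : WP Γ N).left i = γ := by simp [tG_left]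
  refine le_antisymm ?_ (range_single_le (tG_right i γ) (hleft.symm ▸ hfin) (hleft.symm ▸ hγ))
  rintro _ ⟨v, rfl⟩
  exact ⟨_, (sub_wreathRep_tG i γ v).symm⟩

lemma range_one_sub_wreathRep_tS {i j : Fin N} (hij : i ≠ j) (γ : Γ) :
    (1 - wreathRep Γ N (tS i j γ)).range = (antidiagonal i j γ).range := by
  apply le_antisymm
  · rintro _ ⟨v, rfl⟩
    exact ⟨_, (sub_wreathRep_tS hij γ v).symm⟩
  · have hle := range_antidiagonal_le (s := tS i j γ) (i := i) (j := j) (by simp [tS_right])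
    rwa [tS_left_apply_right hij] at hle

lemma tG_mem_SRefl {γ : Γ} (hfin : IsOfFinOrder γ) (hγ : γ ≠ 1) (i : Fin N) :
    tG i γ ∈ SRefl Γ N := by
  rw [mem_SRefl_iff_finrank, range_one_sub_wreathRep_tG hfin hγ,
    LinearMap.finrank_range_of_inj (Pi.single_injective (M := fun _ ↦ Fin 2 → ℂ) i),
    Module.finrank_fin_fun]

lemma tS_mem_SRefl {i j : Fin N} (hij : i ≠ j) (γ : Γ) : tS i j γ ∈ SRefl Γ N := by
  rw [mem_SRefl_iff_finrank, range_one_sub_wreathRep_tS hij,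
    LinearMap.finrank_range_of_inj (antidiagonal_injective hij γ), Module.finrank_fin_fun]

lemma range_one_sub_wreathRep_eq_of_injective {s : WP Γ N} (hs : s ∈ SRefl Γ N)
    {φ : (Fin 2 → ℂ) →ₗ[ℂ] Fin N → Fin 2 → ℂ} (hφ : Function.Injective φ)
    (hle : φ.range ≤ (1 - wreathRep Γ N s).range) : (1 - wreathRep Γ N s).range = φ.range := by
  refine (Submodule.eq_of_le_of_finrank_eq hle ?_).symm
  rw [LinearMap.finrank_range_of_inj hφ, Module.finrank_fin_fun, mem_SRefl_iff_finrank.mp hs]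

lemma sub_wreathRep_mem_range (s : WP Γ N) (v : Fin N → Fin 2 → ℂ) :
    v - wreathRep Γ N s v ∈ (1 - wreathRep Γ N s).range := ⟨v, rfl⟩

lemma exists_eq_tG_of_mem_SRefl [Finite Γ] {s : WP Γ N} (hs : s ∈ SRefl Γ N)
    (hright : s.right = 1) : ∃ (i : Fin N) (γ : Γ), γ ≠ 1 ∧ s = tG i γ := by
  obtain ⟨i, hi⟩ : ∃ i, s.left i ≠ 1 := by
    by_contra! hleft
    obtain rfl : s = 1 := SemidirectProduct.ext (funext hleft) hright
    rw [mem_SRefl_iff_finrank, map_one, sub_self, LinearMap.range_zero, finrank_bot] at hs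
    exact two_ne_zero hs.symm
  have hrange := range_one_sub_wreathRep_eq_of_injective hs
    (Pi.single_injective (M := fun _ ↦ Fin 2 → ℂ) i)
    (range_single_le hright (isOfFinOrder_of_finite _) hi)
  refine ⟨i, s.left i, hi, SemidirectProduct.ext (funext fun l ↦ ?_) hright⟩
  rw [tG_left]
  rcases eq_or_ne l i with rfl | hli
  · rw [Pi.mulSingle_eq_same]
  rw [Pi.mulSingle_eq_of_ne hli]
  refine (left_eq_one_and_right_apply_of_fixed fun v ↦ ?_).1
  obtain ⟨a, ha⟩ := hrange ▸ sub_wreathRep_mem_range s v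
  have hl := congrFun ha l
  rw [LinearMap.single_apply, Pi.single_eq_of_ne hli, Pi.sub_apply] at hl
  exact (sub_eq_zero.mp hl.symm).symm

lemma exists_eq_tS_of_mem_SRefl {s : WP Γ N} (hs : s ∈ SRefl Γ N) (hright : s.right ≠ 1) :
    ∃ (i j : Fin N) (γ : Γ), i ≠ j ∧ s = tS i j γ := by
  obtain ⟨i, j, hj, hij⟩ : ∃ i j, s.right i = j ∧ i ≠ j := by
    by_contra! hfix
    exact hright (Equiv.ext fun i ↦ (hfix i _ rfl).symm)
  have hrange := range_one_sub_wreathRep_eq_of_injective hs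
    (antidiagonal_injective hij (s.left j)) (range_antidiagonal_le hj)
  have hmem (v) : v - wreathRep Γ N s v ∈ (antidiagonal i j (s.left j)).range :=
    hrange ▸ sub_wreathRep_mem_range s v
  have hfix (l : Fin N) (hli : l ≠ i) (hlj : l ≠ j) : s.left l = 1 ∧ s.right l = l :=
    left_eq_one_and_right_apply_of_fixed fun v ↦
      (sub_eq_zero.mp (apply_eq_zero_of_mem_range_antidiagonal hli hlj (hmem v))).symm
  have hswap : s.right = Equiv.swap i j :=
    perm_eq_swap_of_forall_ne hij hj fun l hli hlj ↦ (hfix l hli hlj).2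
  have hleft : s.left i = (s.left j)⁻¹ := by
    refine eq_inv_of_mul_eq_one_right (tautRep_injective (LinearMap.ext fun a ↦ ?_))
    have ha := apply_right_eq_of_mem_range_antidiagonal hij (hmem (Pi.single j a))
    rw [Pi.sub_apply, Pi.sub_apply, wreathRep_apply, wreathRep_apply, hswap, Equiv.swap_inv,
      Equiv.swap_apply_left, Equiv.swap_apply_right, Pi.single_eq_same, Pi.single_eq_of_ne hij,
      map_zero, zero_sub, sub_zero, map_neg, neg_neg] at ha
    rw [map_mul, map_one]
    exact ha.symm
  exact ⟨i, j, s.left j, hij, eq_tS hij hswap hleft fun l hli hlj ↦ (hfix l hli hlj).1⟩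

lemma projS_tG {γ : Γ} (hfin : IsOfFinOrder γ) (hγ : γ ≠ 1) (i : Fin N) (u : Fin N → Fin 2 → ℂ) :
    projS Γ N (tG i γ) u = Pi.single i (u i) := by
  have hrange : Pi.single i (u i) ∈ (1 - wreathRep Γ N (tG i γ)).range := by
    rw [range_one_sub_wreathRep_tG hfin hγ]
    exact ⟨u i, rfl⟩
  have hfixed : wreathRep Γ N (tG i γ) (u - Pi.single i (u i)) = u - Pi.single i (u i) := by
    refine (sub_eq_zero.mp ?_).symm
    rw [sub_wreathRep_tG, Pi.sub_apply, Pi.single_eq_same, sub_self, map_zero, sub_zero,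
      Pi.single_zero]
  simpa using projS_add_of_mem_range_of_fixed (isOfFinOrder_tG hfin i) hrange hfixed

lemma omS_tG {γ : Γ} (hfin : IsOfFinOrder γ) (hγ : γ ≠ 1) (i : Fin N) (u v : Fin N → Fin 2 → ℂ) :
    omS Γ N (tG i γ) u v = omL (u i) (v i) := by
  rw [omS, projS_tG hfin hγ, projS_tG hfin hγ, omV, Fintype.sum_eq_single i]
  · simp only [Pi.single_eq_same]
  · intro l hl
    simp [hl]

lemma projS_tS {i j : Fin N} (hij : i ≠ j) (γ : Γ) (u : Fin N → Fin 2 → ℂ) :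
    projS Γ N (tS i j γ) u = (2⁻¹ : ℂ) • antidiagonal i j γ (u i - tautRep Γ γ⁻¹ (u j)) := by
  set a := u i - tautRep Γ γ⁻¹ (u j) with ha
  have hrange : (2⁻¹ : ℂ) • antidiagonal i j γ a ∈ (1 - wreathRep Γ N (tS i j γ)).range := by
    rw [range_one_sub_wreathRep_tS hij]
    exact ⟨(2⁻¹ : ℂ) • a, map_smul _ _ _⟩
  have hfixed : wreathRep Γ N (tS i j γ) (u - (2⁻¹ : ℂ) • antidiagonal i j γ a) =
      u - (2⁻¹ : ℂ) • antidiagonal i j γ a := by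
    have hcoord : (u - (2⁻¹ : ℂ) • antidiagonal i j γ a) i -
        tautRep Γ γ⁻¹ ((u - (2⁻¹ : ℂ) • antidiagonal i j γ a) j) = 0 := by
      simp only [antidiagonal_apply, Pi.sub_apply, Pi.smul_apply, Pi.single_eq_same,
        Pi.single_eq_of_ne hij, Pi.single_eq_of_ne hij.symm, map_sub, map_smul, map_neg,
        Representation.inv_self_apply, sub_zero, zero_sub]
      rw [ha]
      module
    refine (sub_eq_zero.mp ?_).symm
    rw [sub_wreathRep_tS hij, hcoord, map_zero]
  simpa using projS_add_of_mem_range_of_fixed (isOfFinOrder_tS hij γ) hrange hfixed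

lemma omV_antidiagonal {i j : Fin N} (hij : i ≠ j) (γ : Γ) (a b : Fin 2 → ℂ) :
    omV N (antidiagonal i j γ a) (antidiagonal i j γ b) = 2 * omL a b := by
  rw [omV, Fintype.sum_eq_add i j hij]
  · simp [antidiagonal_apply, hij, hij.symm, omL_neg_neg, omL_tautRep, two_mul]
  · rintro l ⟨hli, hlj⟩
    simp [antidiagonal_apply, hli, hlj]

lemma omS_tS {i j : Fin N} (hij : i ≠ j) (γ : Γ) (u v : Fin N → Fin 2 → ℂ) :
    omS Γ N (tS i j γ) u v =
      2⁻¹ * omL (u i - tautRep Γ γ⁻¹ (u j)) (v i - tautRep Γ γ⁻¹ (v j)) := by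
  rw [omS, projS_tS hij, projS_tS hij, ← map_smul, ← map_smul, omV_antidiagonal hij, omL_smul_smul]
  ring

lemma omS_tS_eq_add {i j : Fin N} (hij : i ≠ j) (γ : Γ) (u v : Fin N → Fin 2 → ℂ) :
    omS Γ N (tS i j γ) u v =
      (omL (u i) (v i) - omL (tautRep Γ γ (u i)) (v j)) / 2 +
        (omL (u j) (v j) - omL (tautRep Γ γ⁻¹ (u j)) (v i)) / 2 := by
  rw [omS_tS hij, omL_sub_left, omL_sub_right, omL_sub_right, omL_tautRep, omL_tautRep_inv_right]
  ring

lemma SRefl_eq_image_union_image [Finite Γ] :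
    SRefl Γ N = (fun p : Fin N × Γ ↦ tG p.1 p.2) '' {p | p.2 ≠ 1} ∪
      (fun p : Fin N × Fin N × Γ ↦ tS p.1 p.2.1 p.2.2) '' {p | p.1 < p.2.1} := by
  apply Set.Subset.antisymm
  · intro s hs
    by_cases hright : s.right = 1
    · obtain ⟨i, γ, hγ, rfl⟩ := exists_eq_tG_of_mem_SRefl hs hright
      exact .inl ⟨(i, γ), hγ, rfl⟩
    · obtain ⟨i, j, γ, hij, rfl⟩ := exists_eq_tS_of_mem_SRefl hs hright
      rcases hij.lt_or_gt with hlt | hgt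
      · exact .inr ⟨(i, j, γ), hlt, rfl⟩
      · exact .inr ⟨(j, i, γ⁻¹), hgt, tS_swap hij γ⟩
  · rintro _ (⟨⟨i, γ⟩, hγ, rfl⟩ | ⟨⟨i, j, γ⟩, hij, rfl⟩)
    · exact tG_mem_SRefl (isOfFinOrder_of_finite γ) hγ i
    · exact tS_mem_SRefl hij.ne γ

lemma finsum_mem_SRefl [Fintype Γ] [DecidableEq Γ] {M : Type*} [AddCommMonoid M]
    (F : WP Γ N → M) (G : Fin N → Fin N → Γ → M)
    (hG : ∀ i j γ, i ≠ j → F (tS i j γ) = G i j γ + G j i γ⁻¹) :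
    ∑ᶠ s ∈ SRefl Γ N, F s =
      ∑ i, ∑ γ : Γ with γ ≠ 1, F (tG i γ) + ∑ i, ∑ j with j ≠ i, ∑ γ, G i j γ := by
  have hdisjoint : Disjoint ((fun p : Fin N × Γ ↦ (tG p.1 p.2 : WP Γ N)) '' {p | p.2 ≠ 1})
      ((fun p : Fin N × Fin N × Γ ↦ tS p.1 p.2.1 p.2.2) '' {p | p.1 < p.2.1}) := by
    rw [Set.disjoint_left]
    rintro _ ⟨⟨l, γ⟩, -, rfl⟩ ⟨⟨i, j, δ⟩, hij, h⟩
    exact tG_ne_tS hij.ne l γ δ h.symm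
  rw [SRefl_eq_image_union_image, finsum_mem_union hdisjoint (Set.toFinite _) (Set.toFinite _),
    finsum_mem_image tG_injOn, finsum_mem_image tS_injOn]
  congr 1
  · rw [← Finset.coe_filter_univ, finsum_mem_coe_finset]
    simp only [Finset.sum_filter, Fintype.sum_prod_type]
  · rw [← sum_lt_add_swap_eq_sum_ne, ← Finset.coe_filter_univ, finsum_mem_coe_finset]
    refine Finset.sum_congr rfl fun p hp ↦ hG _ _ _ ?_
    exact (Finset.mem_filter.mp hp).2.ne

end Reflections

section Relators

variable {Γ : Subgroup SL2} {N : ℕ}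

lemma sV_zero : sV Γ N 0 = 0 := by
  simp [sV, nV]

lemma sV_single (i : Fin N) (a : Fin 2 → ℂ) :
    sV Γ N (Pi.single i a) = a 0 • sX Γ N i 0 + a 1 • sX Γ N i 1 := by
  rw [sV, nV, Fintype.sum_eq_single i fun j hj ↦ by simp [hj]]
  simp [Fin.sum_univ_two, sX]

lemma sV_eq_sum_single (u : Fin N → Fin 2 → ℂ) :
    sV Γ N u = ∑ i, sV Γ N (Pi.single i (u i)) := by
  simp only [sV_single]
  simp [sV, nV, Fin.sum_univ_two, sX]

lemma commutator_sV_single_self (i : Fin N) (a b : Fin 2 → ℂ) :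
    sV Γ N (Pi.single i a) * sV Γ N (Pi.single i b) -
        sV Γ N (Pi.single i b) * sV Γ N (Pi.single i a) =
      omL a b • (sX Γ N i 0 * sX Γ N i 1 - sX Γ N i 1 * sX Γ N i 0) := by
  simp only [sV_single, add_mul, mul_add, smul_mul_assoc, mul_smul_comm, omL]
  module

lemma commutator_sV_eq_sum (u v : Fin N → Fin 2 → ℂ) :
    sV Γ N u * sV Γ N v - sV Γ N v * sV Γ N u =
      ∑ i, (omL (u i) (v i) • (sX Γ N i 0 * sX Γ N i 1 - sX Γ N i 1 * sX Γ N i 0) +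
        ∑ j with j ≠ i, (sV Γ N (Pi.single i (u i)) * sV Γ N (Pi.single j (v j)) -
          sV Γ N (Pi.single j (v j)) * sV Γ N (Pi.single i (u i)))) := by
  have hexpand : sV Γ N u * sV Γ N v - sV Γ N v * sV Γ N u =
      ∑ i, ∑ j, (sV Γ N (Pi.single i (u i)) * sV Γ N (Pi.single j (v j)) -
        sV Γ N (Pi.single j (v j)) * sV Γ N (Pi.single i (u i))) := by
    rw [sV_eq_sum_single u, sV_eq_sum_single v, Finset.sum_mul_sum,
      Finset.sum_mul_sum Finset.univ Finset.univ (fun j ↦ sV Γ N (Pi.single j (v j))),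
      Finset.sum_comm (f := fun j i ↦ sV Γ N (Pi.single j (v j)) * sV Γ N (Pi.single i (u i)))]
    simp only [Finset.sum_sub_distrib]
  rw [hexpand]
  refine Finset.sum_congr rfl fun i _ ↦ ?_
  rw [← commutator_sV_single_self, Finset.filter_ne']
  exact (Finset.add_sum_erase _ _ (Finset.mem_univ i)).symm

variable [Fintype Γ]

/-- The generalization of the relator (R2) to an arbitrary weight `f` on the reflections,
`[a_i, b_j] + ½ ∑_γ f(s_{ij}γ_iγ_j⁻¹) ω_L(γa, b) s_{ij}γ_iγ_j⁻¹`. -/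
def offDiagRelator (f : WP Γ N → ℂ) (i j : Fin N) (a b : Fin 2 → ℂ) : Smash Γ N :=
  sV Γ N (Pi.single i a) * sV Γ N (Pi.single j b) -
      sV Γ N (Pi.single j b) * sV Γ N (Pi.single i a) +
    ∑ γ : Γ, (f (tS i j γ) / 2 * omL (tautRep Γ γ a) b) • sG Γ N (tS i j γ)

lemma offDiagRelator_eq {f : WP Γ N → ℂ} {i j : Fin N} {k : ℂ} (hk : ∀ γ, f (tS i j γ) = k)
    (a b : Fin 2 → ℂ) :
    offDiagRelator f i j a b =
      sV Γ N (Pi.single i a) * sV Γ N (Pi.single j b) -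
          sV Γ N (Pi.single j b) * sV Γ N (Pi.single i a) +
        (k / 2) • ∑ γ : Γ, omL (tautRep Γ γ a) b • sG Γ N (tS i j γ) := by
  simp only [offDiagRelator, hk, Finset.smul_sum, smul_smul]

lemma offDiagRelator_zero_left (f : WP Γ N → ℂ) (i j : Fin N) (b : Fin 2 → ℂ) :
    offDiagRelator f i j 0 b = 0 := by
  simp [offDiagRelator, sV_zero]

lemma offDiagRelator_zero_right (f : WP Γ N → ℂ) (i j : Fin N) (a : Fin 2 → ℂ) :
    offDiagRelator f i j a 0 = 0 := by
  simp [offDiagRelator, sV_zero]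

/-- The generalization of the relator (R1) to an arbitrary weight `f` on the reflections,
`[x_i, y_i] - 1 - ½ ∑_{j ≠ i} ∑_γ f(s_{ij}γ_iγ_j⁻¹) s_{ij}γ_iγ_j⁻¹ - ∑_{γ ≠ 1} f(γ_i) γ_i`. -/
def diagRelator [DecidableEq Γ] (f : WP Γ N → ℂ) (i : Fin N) : Smash Γ N :=
  sX Γ N i 0 * sX Γ N i 1 - sX Γ N i 1 * sX Γ N i 0 -
    (1 + ∑ j with j ≠ i, ∑ γ : Γ, (f (tS i j γ) / 2) • sG Γ N (tS i j γ) +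
      ∑ γ : Γ with γ ≠ 1, f (tG i γ) • sG Γ N (tG i γ))

lemma diagRelator_eq [DecidableEq Γ] {f : WP Γ N → ℂ} {i : Fin N} {k : ℂ} {c : Γ → ℂ}
    (hk : ∀ j γ, i ≠ j → f (tS i j γ) = k) (hc : ∀ γ, γ ≠ 1 → f (tG i γ) = c γ) :
    diagRelator f i = sX Γ N i 0 * sX Γ N i 1 - sX Γ N i 1 * sX Γ N i 0 -
      (1 + (k / 2) • ∑ j with j ≠ i, ∑ γ : Γ, sG Γ N (tS i j γ) +
        ∑ γ : Γ with γ ≠ 1, c γ • sG Γ N (tG i γ)) := by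
  have hS : ∑ j with j ≠ i, ∑ γ : Γ, (f (tS i j γ) / 2) • sG Γ N (tS i j γ) =
      (k / 2) • ∑ j with j ≠ i, ∑ γ : Γ, sG Γ N (tS i j γ) := by
    simp only [Finset.smul_sum]
    refine Finset.sum_congr rfl fun j hj ↦ Finset.sum_congr rfl fun γ _ ↦ ?_
    rw [hk j γ (Finset.mem_filter.mp hj).2.symm]
  have hG : ∑ γ : Γ with γ ≠ 1, f (tG i γ) • sG Γ N (tG i γ) =
      ∑ γ : Γ with γ ≠ 1, c γ • sG Γ N (tG i γ) :=
    Finset.sum_congr rfl fun γ hγ ↦ by rw [hc γ (Finset.mem_filter.mp hγ).2]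
  rw [diagRelator, hS, hG]

lemma kappa_eq_sum [DecidableEq Γ] (f : WP Γ N → ℂ) (u v : Fin N → Fin 2 → ℂ) :
    kappa Γ N f u v = ∑ i, (omL (u i) (v i) •
        (1 + ∑ j with j ≠ i, ∑ γ : Γ, (f (tS i j γ) / 2) • sG Γ N (tS i j γ) +
          ∑ γ : Γ with γ ≠ 1, f (tG i γ) • sG Γ N (tG i γ)) -
      ∑ j with j ≠ i, ∑ γ : Γ,
        (f (tS i j γ) / 2 * omL (tautRep Γ γ (u i)) (v j)) • sG Γ N (tS i j γ)) := by
  have hsplit (i j : Fin N) (γ : Γ) (hij : i ≠ j) :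
      (f (tS i j γ) * omS Γ N (tS i j γ) u v) • sG Γ N (tS i j γ) =
        (f (tS i j γ) / 2 * (omL (u i) (v i) - omL (tautRep Γ γ (u i)) (v j))) •
            sG Γ N (tS i j γ) +
          (f (tS j i γ⁻¹) / 2 * (omL (u j) (v j) - omL (tautRep Γ γ⁻¹ (u j)) (v i))) •
            sG Γ N (tS j i γ⁻¹) := by
    rw [tS_swap hij, omS_tS_eq_add hij, ← add_smul]
    congr 1
    ring
  rw [kappa, finsum_mem_SRefl _ (fun i j γ ↦ (f (tS i j γ) / 2 *
      (omL (u i) (v i) - omL (tautRep Γ γ (u i)) (v j))) • sG Γ N (tS i j γ)) hsplit,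
    omV, Finset.sum_smul, ← Finset.sum_add_distrib, ← Finset.sum_add_distrib]
  refine Finset.sum_congr rfl fun i _ ↦ ?_
  have hG : ∑ γ : Γ with γ ≠ 1, (f (tG i γ) * omS Γ N (tG i γ) u v) • sG Γ N (tG i γ) =
      omL (u i) (v i) • ∑ γ : Γ with γ ≠ 1, f (tG i γ) • sG Γ N (tG i γ) := by
    rw [Finset.smul_sum]
    refine Finset.sum_congr rfl fun γ hγ ↦ ?_
    rw [omS_tG (isOfFinOrder_of_finite γ) (Finset.mem_filter.mp hγ).2, smul_smul, mul_comm]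
  have hS : ∑ j with j ≠ i, ∑ γ : Γ, (f (tS i j γ) / 2 *
        (omL (u i) (v i) - omL (tautRep Γ γ (u i)) (v j))) • sG Γ N (tS i j γ) =
      omL (u i) (v i) • ∑ j with j ≠ i, ∑ γ : Γ, (f (tS i j γ) / 2) • sG Γ N (tS i j γ) -
        ∑ j with j ≠ i, ∑ γ : Γ,
          (f (tS i j γ) / 2 * omL (tautRep Γ γ (u i)) (v j)) • sG Γ N (tS i j γ) := by
    simp only [Finset.smul_sum, ← Finset.sum_sub_distrib]
    refine Finset.sum_congr rfl fun j _ ↦ Finset.sum_congr rfl fun γ _ ↦ ?_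
    module
  rw [hG, hS]
  module

lemma relator_eq_sum [DecidableEq Γ] (f : WP Γ N → ℂ) (u v : Fin N → Fin 2 → ℂ) :
    sV Γ N u * sV Γ N v - sV Γ N v * sV Γ N u - kappa Γ N f u v =
      ∑ i, (omL (u i) (v i) • diagRelator f i +
        ∑ j with j ≠ i, offDiagRelator f i j (u i) (v j)) := by
  rw [commutator_sV_eq_sum, kappa_eq_sum, ← Finset.sum_sub_distrib]
  refine Finset.sum_congr rfl fun i _ ↦ ?_
  simp only [diagRelator, offDiagRelator, Finset.sum_add_distrib]
  module

lemma diagRelator_eq_relator [DecidableEq Γ] (f : WP Γ N → ℂ) (i : Fin N) :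
    diagRelator f i = sV Γ N (Pi.single i ![1, 0]) * sV Γ N (Pi.single i ![0, 1]) -
      sV Γ N (Pi.single i ![0, 1]) * sV Γ N (Pi.single i ![1, 0]) -
        kappa Γ N f (Pi.single i ![1, 0]) (Pi.single i ![0, 1]) := by
  rw [relator_eq_sum, Fintype.sum_eq_single i]
  · have hoff : ∑ j with j ≠ i, offDiagRelator f i j ![1, 0]
        ((Pi.single i ![0, 1] : Fin N → Fin 2 → ℂ) j) = 0 :=
      Finset.sum_eq_zero fun j hj ↦ by
        rw [Pi.single_eq_of_ne (Finset.mem_filter.mp hj).2, offDiagRelator_zero_right]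
    rw [Pi.single_eq_same, Pi.single_eq_same, hoff]
    simp [omL]
  · intro l hl
    simp only [Pi.single_eq_of_ne hl, omL_zero_left, zero_smul, offDiagRelator_zero_left,
      Finset.sum_const_zero, add_zero]

lemma offDiagRelator_eq_relator (f : WP Γ N → ℂ) {i j : Fin N} (hij : i ≠ j) (a b : Fin 2 → ℂ) :
    offDiagRelator f i j a b = sV Γ N (Pi.single i a) * sV Γ N (Pi.single j b) -
      sV Γ N (Pi.single j b) * sV Γ N (Pi.single i a) -
        kappa Γ N f (Pi.single i a) (Pi.single j b) := by
  classical
  rw [relator_eq_sum, Fintype.sum_eq_single i]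
  · rw [Pi.single_eq_same, Pi.single_eq_of_ne hij, omL_zero_right, zero_smul, zero_add,
      Finset.sum_eq_single_of_mem j (by simp [hij.symm]), Pi.single_eq_same]
    intro l _ hl
    rw [Pi.single_eq_of_ne hl, offDiagRelator_zero_right]
  · intro l hl
    simp only [Pi.single_eq_of_ne hl, omL_zero_left, zero_smul, offDiagRelator_zero_left,
      Finset.sum_const_zero, add_zero]

end Relators

theorem stmt_2_general (Γ : Subgroup SL2) [Fintype Γ] [DecidableEq Γ] (N : ℕ) (f : WP Γ N → ℂ) :
    TwoSidedIdeal.span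
      {z : Smash Γ N | ∃ u v : Fin N → Fin 2 → ℂ,
        z = sV Γ N u * sV Γ N v - sV Γ N v * sV Γ N u - kappa Γ N f u v} =
    TwoSidedIdeal.span
      ({z : Smash Γ N | ∃ i : Fin N, z = diagRelator f i} ∪
       {z : Smash Γ N | ∃ (i j : Fin N) (u v : Fin 2 → ℂ), i ≠ j ∧
          z = offDiagRelator f i j u v}) := by
  apply le_antisymm <;> refine TwoSidedIdeal.span_le.mpr ?_
  · rintro _ ⟨u, v, rfl⟩
    rw [relator_eq_sum]
    refine sum_mem fun i _ ↦ add_mem ?_ (sum_mem fun j hj ↦ ?_)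
    · rw [Algebra.smul_def]
      exact TwoSidedIdeal.mul_mem_left _ _ _ (TwoSidedIdeal.subset_span (.inl ⟨i, rfl⟩))
    · exact TwoSidedIdeal.subset_span
        (.inr ⟨i, j, u i, v j, (Finset.mem_filter.mp hj).2.symm, rfl⟩)
  · rintro _ (⟨i, rfl⟩ | ⟨i, j, u, v, hij, rfl⟩) <;> refine TwoSidedIdeal.subset_span ?_
    · exact ⟨_, _, diagRelator_eq_relator f i⟩
    · exact ⟨_, _, offDiagRelator_eq_relator f hij u v⟩

/-- in the smash product `Γ_N ♯ TV`, the two-sided ideal generated by the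
elements `[u,v] - κ(u,v)`, `u, v ∈ V`, where
`κ(u,v) = ω_V(u,v)·1 + ∑_{s∈𝒮} f_s ω_s(u,v)·s` and `f` is the class function with value
`k` on the reflections `s_{ij}γ_iγ_j⁻¹` of type (S) and value `c_γ` on the reflections
`γ_i` of type (Γ), coincides with the two-sided ideal generated by the relators of (R1)
and (R2); in particular the two presentations define the same algebra `H_{1,k,c}(Γ_N)`. -/
theorem stmt_2 (Γ : Subgroup SL2) [Fintype Γ] [DecidableEq Γ] (N : ℕ)
    (k : ℂ) (c : Γ → ℂ) (hc : ∀ γ δ : Γ, c (δ * γ * δ⁻¹) = c γ)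
    (f : WP Γ N → ℂ)
    (hf1 : ∀ (i j : Fin N) (γ : Γ), i ≠ j → f (tS i j γ) = k)
    (hf2 : ∀ (i : Fin N) (γ : Γ), γ ≠ 1 → f (tG i γ) = c γ) :
    TwoSidedIdeal.span
      {z : Smash Γ N | ∃ u v : Fin N → Fin 2 → ℂ,
        z = sV Γ N u * sV Γ N v - sV Γ N v * sV Γ N u - kappa Γ N f u v} =
    TwoSidedIdeal.span
      ({z : Smash Γ N | ∃ i : Fin N,
          z = sX Γ N i 0 * sX Γ N i 1 - sX Γ N i 1 * sX Γ N i 0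
            - (1 + (k / 2) • ∑ j ∈ Finset.univ.filter (fun j : Fin N => j ≠ i),
                  ∑ γ : Γ, sG Γ N (tS i j γ)
                + ∑ γ ∈ Finset.univ.filter (fun γ : Γ => γ ≠ 1), c γ • sG Γ N (tG i γ))} ∪
       {z : Smash Γ N | ∃ (i j : Fin N) (u v : Fin 2 → ℂ), i ≠ j ∧
          z = sV Γ N (Pi.single i u) * sV Γ N (Pi.single j v)
            - sV Γ N (Pi.single j v) * sV Γ N (Pi.single i u)
            + (k / 2) • ∑ γ : Γ,
                omL (Matrix.mulVec ((γ : SL2) : Matrix (Fin 2) (Fin 2) ℂ) u) v •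
                  sG Γ N (tS i j γ)}) := by
  rw [stmt_2_general]
  congr 2 <;> ext z
  · exact exists_congr fun i ↦ Eq.congr_right (diagRelator_eq (hf1 i) (hf2 i))
  · exact exists₄_congr fun i j u v ↦ and_congr_right fun hij ↦
      Eq.congr_right (offDiagRelator_eq (hf1 i j · hij) u v)
end
end

section
/- Let W be a finite-dimensional representation of S_N with character ψ_W and Y a finite-dimensional representation of a finite group Γ, and let M = W ⊗ Y^{⊗N} carry the Γ_N-module structure described in the context. Then for all i ≠ j and all γ ∈ Γ, the trace of s_{ij}·γ_i·γ_j^{-1} acting on M equals ψ_W(s_{ij}) · (dim Y)^{N−1}. -/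
open scoped TensorProduct

/-!
In `S_N ⋉ Γ^N` one has `s_{ij} γ_i γ_j⁻¹ = γ_i⁻¹ s_{ij} γ_i`, so the trace in question is that of
`s_{ij}` itself. On `Y^{⊗N}` the transposition permutes the basis of pure tensors of basis vectors;
its trace there is the number of maps `f` from the set of factors to a basis of `Y` with
`f i = f j`.
-/

theorem trace_eq_ncard_fixedPoints_of_apply_basis {R M κ : Type*} [CommRing R] [AddCommGroup M]
    [Module R M] [Finite κ] (b : Module.Basis κ R M) (σ : Equiv.Perm κ) (f : M →ₗ[R] M)
    (hf : ∀ k, f (b k) = b (σ k)) :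
    LinearMap.trace R M f = (Function.fixedPoints σ).ncard := by
  classical
  have := Fintype.ofFinite κ
  have toMatrix_eq : LinearMap.toMatrix b b f = σ⁻¹.permMatrix R := by
    ext k l
    simp [LinearMap.toMatrix_apply, hf, Finsupp.single_apply, PEquiv.toMatrix_apply,
      Equiv.symm_apply_eq, eq_comm (a := k)]
  rw [LinearMap.trace_eq_matrix_trace R b, toMatrix_eq, ← Matrix.transpose_permMatrix,
    Matrix.trace_transpose, Matrix.trace_permutation]

theorem ncard_setOf_apply_eq_apply {ι κ : Type*} [Finite ι] {i j : ι} (hij : i ≠ j) :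
    {f : ι → κ | f i = f j}.ncard = Nat.card κ ^ (Nat.card ι - 1) := by
  classical
  have := Fintype.ofFinite ι
  let restrict : {f : ι → κ | f i = f j} ≃ ({l // l ≠ j} → κ) :=
    { toFun f l := f.1 l
      invFun g := ⟨fun l => if h : l = j then g ⟨i, hij⟩ else g ⟨l, h⟩, by simp [hij]⟩
      left_inv f := by
        ext l
        by_cases h : l = j
        · simpa [h] using f.2.out
        · simp [h]
      right_inv g := by
        ext l
        simp [l.2] }
  rw [← Nat.card_coe_set_eq, Nat.card_congr restrict, Nat.card_fun]
  simp [Fintype.card_subtype_compl]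

theorem fixedPoints_arrowCongr_swap {ι κ : Type*} [DecidableEq ι] (i j : ι) :
    Function.fixedPoints ((Equiv.swap i j).arrowCongr (Equiv.refl κ)) = {f | f i = f j} := by
  ext f
  change f ∘ Equiv.swap i j = f ↔ f i = f j
  rw [Equiv.comp_swap_eq_update]
  constructor
  · intro hf
    simpa using (congrFun hf i).symm
  · intro hf
    rw [hf, Function.update_eq_self, ← hf, Function.update_eq_self]

section TensorPower

variable {R Y ι : Type*} [CommRing R] [AddCommGroup Y] [Module R Y]

variable (R Y) in
/-- The action of `σ` on `Y^{⊗ι}` by permuting the tensor factors: the factor in position `l` moves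
to position `σ l`. -/
noncomputable def permuteFactors (σ : Equiv.Perm ι) :
    (⨂[R] _ : ι, Y) →ₗ[R] ⨂[R] _ : ι, Y :=
  PiTensorProduct.reindex R (fun _ => Y) σ

theorem permuteFactors_tprod (σ : Equiv.Perm ι) (v : ι → Y) :
    permuteFactors R Y σ (PiTensorProduct.tprod R v) =
      PiTensorProduct.tprod R fun l => v (σ.symm l) :=
  PiTensorProduct.reindex_tprod σ v

theorem trace_permuteFactors_eq_ncard_fixedPoints [Finite ι] {κ : Type*} [Finite κ]
    (b : Module.Basis κ R Y) (σ : Equiv.Perm ι) :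
    LinearMap.trace R _ (permuteFactors R Y σ) =
      (Function.fixedPoints (σ.arrowCongr (Equiv.refl κ))).ncard := by
  refine trace_eq_ncard_fixedPoints_of_apply_basis
    (Basis.piTensorProduct fun _ : ι => b) _ _ fun f => ?_
  rw [Basis.piTensorProduct_apply, Basis.piTensorProduct_apply, permuteFactors_tprod]
  rfl

theorem trace_permuteFactors_swap [Module.Free R Y] [Module.Finite R Y] [Finite ι] [DecidableEq ι]
    {i j : ι} (hij : i ≠ j) :
    LinearMap.trace R _ (permuteFactors R Y (Equiv.swap i j)) =
      (Module.finrank R Y : R) ^ (Nat.card ι - 1) := by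
  nontriviality R
  rw [trace_permuteFactors_eq_ncard_fixedPoints (Module.Free.chooseBasis R Y),
    fixedPoints_arrowCongr_swap, ncard_setOf_apply_eq_apply hij, Nat.card_eq_fintype_card,
    ← Module.finrank_eq_card_chooseBasisIndex, Nat.cast_pow]

variable [DecidableEq ι]

/-- The operator `φ_i⁻¹ s_{ij} φ_i` on `Y^{⊗ι}`, where `φ_i` is `φ` acting on the `i`-th tensor
factor and `s_{ij}` exchanges the factors `i` and `j`. -/
noncomputable def conjSwap (φ : Y ≃ₗ[R] Y) (i j : ι) :
    (⨂[R] _ : ι, Y) →ₗ[R] ⨂[R] _ : ι, Y :=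
  (PiTensorProduct.congr
    (Function.update (fun _ : ι => LinearEquiv.refl R Y) i φ.symm)).conj
      (permuteFactors R Y (Equiv.swap i j))

theorem conjSwap_tprod (φ : Y ≃ₗ[R] Y) {i j : ι} (hij : i ≠ j) (v : ι → Y) :
    conjSwap φ i j (PiTensorProduct.tprod R v) = PiTensorProduct.tprod R fun l =>
      if l = j then φ (v i) else if l = i then φ.symm (v j) else v l := by
  rw [conjSwap, LinearEquiv.conj_apply_apply, PiTensorProduct.congr_symm_tprod,
    permuteFactors_tprod, PiTensorProduct.congr_tprod, Equiv.symm_swap]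
  congr 1
  ext l
  rcases eq_or_ne l j with rfl | hlj
  · simp [hij.symm]
  rcases eq_or_ne l i with rfl | hli
  · simp [hij, hij.symm]
  · simp [hlj, hli, Equiv.swap_apply_of_ne_of_ne hli hlj]

theorem trace_conjSwap [Module.Free R Y] [Module.Finite R Y] [Finite ι]
    (φ : Y ≃ₗ[R] Y) {i j : ι} (hij : i ≠ j) :
    LinearMap.trace R _ (conjSwap φ i j) = (Module.finrank R Y : R) ^ (Nat.card ι - 1) := by
  rw [conjSwap, LinearMap.trace_conj', trace_permuteFactors_swap hij]

end TensorPower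

theorem stmt_8_general {R Γ W Y ι : Type*} [CommRing R] [Group Γ]
    [AddCommGroup W] [Module R W] [Module.Free R W] [Module.Finite R W]
    [AddCommGroup Y] [Module R Y] [Module.Free R Y] [Module.Finite R Y]
    [Finite ι] [DecidableEq ι]
    (ρW : Representation R (Equiv.Perm ι) W) (ρY : Representation R Γ Y)
    (γ : Γ) {i j : ι} (hij : i ≠ j)
    (T : (W ⊗[R] (⨂[R] _ : ι, Y)) →ₗ[R] W ⊗[R] (⨂[R] _ : ι, Y))
    (hT : ∀ (w : W) (v : ι → Y),
      T (w ⊗ₜ[R] PiTensorProduct.tprod R v) =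
        ρW (Equiv.swap i j) w ⊗ₜ[R] PiTensorProduct.tprod R fun l =>
          if l = j then ρY γ (v i) else if l = i then ρY γ⁻¹ (v j) else v l) :
    LinearMap.trace R _ T =
      LinearMap.trace R W (ρW (Equiv.swap i j)) *
        (Module.finrank R Y : R) ^ (Nat.card ι - 1) := by
  have : Module.Free R (⨂[R] _ : ι, Y) :=
    .of_basis (Basis.piTensorProduct fun _ : ι => Module.Free.chooseBasis R Y)
  let φ : Y ≃ₗ[R] Y := .ofLinearMap (ρY γ) (ρY γ⁻¹) (by ext; simp) (by ext; simp)
  have T_eq_map : T = TensorProduct.map (ρW (Equiv.swap i j)) (conjSwap φ i j) := by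
    ext w v
    simpa [conjSwap_tprod φ hij, φ] using hT w v
  rw [T_eq_map, LinearMap.trace_tensorProduct', trace_conjSwap φ hij]

/-- let `W` be a finite dimensional representation of `S_N` with character
`ψ_W` and `Y` a finite dimensional representation of a finite group `Γ`, and let
`M = W ⊗ Y^{⊗N}` be the `Γ_N = S_N ⋉ Γ^N`-module where `Γ^N` acts factorwise on `Y^{⊗N}`
(trivially on `W`) and `S_N` acts on `W` while permuting the tensor factors.  Then for
`i ≠ j` and `γ ∈ Γ`, the trace of `s_{ij} γ_i γ_j⁻¹` on `M` (the operator `T` below)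
equals `ψ_W(s_{ij}) · (dim Y)^(N-1)`. -/
theorem stmt_8 (N : ℕ) (Γ : Type) [Group Γ] [Finite Γ]
    (W Y : Type) [AddCommGroup W] [Module ℂ W] [FiniteDimensional ℂ W]
    [AddCommGroup Y] [Module ℂ Y] [FiniteDimensional ℂ Y]
    (ρW : Representation ℂ (Equiv.Perm (Fin N)) W) (ρY : Representation ℂ Γ Y)
    (γ : Γ) (i j : Fin N) (hij : i ≠ j)
    (T : (W ⊗[ℂ] (⨂[ℂ] _ : Fin N, Y)) →ₗ[ℂ] W ⊗[ℂ] (⨂[ℂ] _ : Fin N, Y))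
    (hT : ∀ (w : W) (v : Fin N → Y),
      T (w ⊗ₜ[ℂ] PiTensorProduct.tprod ℂ v) =
        ρW (Equiv.swap i j) w ⊗ₜ[ℂ] PiTensorProduct.tprod ℂ fun l =>
          if l = j then ρY γ (v i) else if l = i then ρY γ⁻¹ (v j) else v l) :
    LinearMap.trace ℂ _ T =
      LinearMap.trace ℂ W (ρW (Equiv.swap i j)) * (Module.finrank ℂ Y : ℂ) ^ (N - 1) := by
  simpa using stmt_8_general ρW ρY γ hij T hT
end
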